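/- For every r ≥ 5 there exists a constant C (depending only on r) such that every n-vertex rainbow K_r-saturated graph has at least (r − 1)n − C edges. -/

import Mathlib

open SimpleGraph

/-- A proper edge-coloring of `G`: distinct edges sharing a vertex get distinct colors. -/
def IsProperEdgeColoring {V : Type} (G : SimpleGraph V) (c : Sym2 V → ℕ) : Prop :=
  ∀ e₁ ∈ G.edgeSet, ∀ e₂ ∈ G.edgeSet, e₁ ≠ e₂ → (∃ v, v ∈ e₁ ∧ v ∈ e₂) → c e₁ ≠ c e₂

/-- `G` contains a rainbow copy of `H` under the edge-coloring `c`. -/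
def HasRainbowCopy {V W : Type} (G : SimpleGraph V) (H : SimpleGraph W)
    (c : Sym2 V → ℕ) : Prop :=
  ∃ f : W → V, Function.Injective f ∧ (∀ a b, H.Adj a b → G.Adj (f a) (f b)) ∧
    ∀ e₁ ∈ H.edgeSet, ∀ e₂ ∈ H.edgeSet, e₁ ≠ e₂ → c (Sym2.map f e₁) ≠ c (Sym2.map f e₂)

/-- `G` is (properly) rainbow `H`-saturated. -/
def IsRainbowSat {V W : Type} (G : SimpleGraph V) (H : SimpleGraph W) : Prop :=
  (∃ c : Sym2 V → ℕ, IsProperEdgeColoring G c ∧ ¬ HasRainbowCopy G H c) ∧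
  ∀ u v : V, u ≠ v → ¬ G.Adj u v →
    ∀ c : Sym2 V → ℕ,
      IsProperEdgeColoring (G ⊔ SimpleGraph.fromEdgeSet {s(u, v)}) c →
      HasRainbowCopy (G ⊔ SimpleGraph.fromEdgeSet {s(u, v)}) H c

/-! Fix a proper coloring `c` of `G` without rainbow `K_r`, and non-adjacent vertices `u ≠ v`. If a
color `α` is seen by neither `u` nor `v`, then giving `uv` the color `α` creates a rainbow `K_r`;
its other `r - 2` vertices form a set `T` of common neighbors of `u` and `v` inside which `α` is
not used. So there are at least `r - 2` common neighbors. If there are no more than that, then `T`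
is the same for all `α`, hence each of the `(r - 2).choose 2` colors inside `T` is seen by `u` or
by `v`, necessarily on an edge leaving `T`, which makes one of the two degrees at least `r` when
`r ≥ 5`. Either way, the number of common neighbors plus the larger degree is at least `2 (r - 1)`.
Summing this over the non-neighbors of a vertex of minimum degree gives the edge bound. -/

/-- The edges of the complete graph on `S`, as unordered pairs of distinct elements of `S`. -/
def edgesWithin {V : Type*} [DecidableEq V] (S : Finset V) : Finset (Sym2 V) :=
  {e ∈ S.sym2 | ¬ e.IsDiag}

/-- The palette of the complete graph on `S`: the colors that `c` gives to pairs inside `S`. -/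
def colorsWithin {V κ : Type*} [DecidableEq V] [DecidableEq κ] (c : Sym2 V → κ)
    (S : Finset V) : Finset κ :=
  (edgesWithin S).image c

/-- The palette of the vertex `v`: the colors that `c` gives to the edges of `G` at `v`. -/
def colorsAt {V κ : Type*} [DecidableEq V] [DecidableEq κ] (G : SimpleGraph V)
    (c : Sym2 V → κ) (v : V) [Fintype (G.neighborSet v)] : Finset κ :=
  (G.incidenceFinset v).image c

/-- A clique of `G` whose edges receive pairwise distinct colors: the vertex set of a rainbow copy
of a complete graph. -/
structure IsRainbowClique {V κ : Type*} [DecidableEq V] (G : SimpleGraph V)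
    (c : Sym2 V → κ) (S : Finset V) : Prop where
  isClique : G.IsClique S
  injOn : Set.InjOn c (edgesWithin S)

/-- A common link of `u` and `v`: a vertex set `T` avoiding both which becomes a rainbow clique
when either of them is added. Such sets remain when a rainbow clique through a new edge `uv` loses
`u` and `v`. -/
structure IsRainbowLink {V κ : Type*} [DecidableEq V] (G : SimpleGraph V)
    (c : Sym2 V → κ) (u v : V) (T : Finset V) : Prop where
  left_notMem : u ∉ T
  right_notMem : v ∉ T
  left : IsRainbowClique G c (insert u T)
  right : IsRainbowClique G c (insert v T)

section RainbowCliques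

variable {V W κ : Type*} [DecidableEq V] {G : SimpleGraph V} {c : Sym2 V → κ} {S T : Finset V}
  {u v : V} {α : κ}

@[simp]
theorem mem_edgesWithin {e : Sym2 V} : e ∈ edgesWithin S ↔ (∀ a ∈ e, a ∈ S) ∧ ¬ e.IsDiag := by
  simp [edgesWithin]

theorem edgesWithin_mono (h : T ⊆ S) : edgesWithin T ⊆ edgesWithin S :=
  Finset.filter_subset_filter _ (Finset.sym2_mono h)

theorem edgesWithin_map [DecidableEq W] (f : W ↪ V) (S : Finset W) :
    edgesWithin (S.map f) = (edgesWithin S).map f.sym2Map := by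
  simp [edgesWithin, Finset.sym2_map, Finset.filter_map, Sym2.isDiag_map f.injective]

theorem card_edgesWithin (S : Finset V) : (edgesWithin S).card = S.card.choose 2 := by
  rw [← Sym2.card_image_offDiag, ← Sym2.filter_image_mk_not_isDiag, ← Finset.sym2_eq_image,
    edgesWithin]

theorem coe_edgesWithin_univ [Fintype V] :
    (edgesWithin (Finset.univ : Finset V) : Set (Sym2 V)) = (⊤ : SimpleGraph V).edgeSet := by
  ext e
  simp

theorem colorsWithin_mono [DecidableEq κ] (h : T ⊆ S) : colorsWithin c T ⊆ colorsWithin c S :=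
  Finset.image_subset_image (edgesWithin_mono h)

theorem IsRainbowClique.mono (hS : IsRainbowClique G c S) (h : T ⊆ S) : IsRainbowClique G c T where
  isClique := hS.isClique.subset (Finset.coe_subset.2 h)
  injOn := hS.injOn.mono (Finset.coe_subset.2 (edgesWithin_mono h))

theorem IsRainbowClique.card_colorsWithin [DecidableEq κ] (hS : IsRainbowClique G c S) :
    (colorsWithin c S).card = S.card.choose 2 := by
  rw [colorsWithin, Finset.card_image_of_injOn hS.injOn, card_edgesWithin]

theorem IsRainbowClique.of_update
    (hS : IsRainbowClique (G ⊔ edge u v) (Function.update c s(u, v) α) S)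
    (huv : ¬ (u ∈ S ∧ v ∈ S)) : IsRainbowClique G c S where
  isClique a ha b hb hab := by
    refine (hS.isClique ha hb hab).resolve_right fun h => huv ?_
    rcases (edge_adj ..).1 h with ⟨⟨rfl, rfl⟩ | ⟨rfl, rfl⟩, -⟩
    exacts [⟨ha, hb⟩, ⟨hb, ha⟩]
  injOn := by
    refine hS.injOn.congr fun e he => Function.update_of_ne ?_ _ _
    rintro rfl
    exact huv (by simpa using (mem_edgesWithin.1 he).1)

theorem IsRainbowClique.isRainbowLink_of_update
    (hS : IsRainbowClique (G ⊔ edge u v) (Function.update c s(u, v) α) S)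
    (hu : u ∈ S) (hv : v ∈ S) (huv : u ≠ v) :
    IsRainbowLink G c u v ((S.erase u).erase v) where
  left_notMem := by simp
  right_notMem := by simp
  left := by
    rw [Finset.erase_right_comm, Finset.insert_erase (by simp [hu, huv])]
    exact (hS.mono (S.erase_subset v)).of_update (by simp)
  right := by
    rw [Finset.insert_erase (by simp [hv, huv.symm])]
    exact (hS.mono (S.erase_subset u)).of_update (by simp)

theorem IsRainbowClique.notMem_colorsWithin_of_update [DecidableEq κ]
    (hS : IsRainbowClique G (Function.update c s(u, v) α) S)
    (hu : u ∈ S) (hv : v ∈ S) (huv : u ≠ v) :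
    α ∉ colorsWithin c ((S.erase u).erase v) := by
  intro hα
  obtain ⟨e, he, rfl⟩ := Finset.mem_image.1 hα
  have e_ne : e ≠ s(u, v) := by
    rintro rfl
    simp at he
  have he_S : e ∈ edgesWithin S :=
    edgesWithin_mono ((Finset.erase_subset _ _).trans (Finset.erase_subset _ _)) he
  refine e_ne (hS.injOn he_S (by simp [hu, hv, huv]) ?_)
  rw [Function.update_of_ne e_ne, Function.update_self]

theorem IsRainbowLink.subset_commonNeighbors (hT : IsRainbowLink G c u v T)
    [Fintype (G.neighborSet u)] [Fintype (G.neighborSet v)] :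
    T ⊆ G.neighborFinset u ∩ G.neighborFinset v := by
  intro w hw
  simp only [Finset.mem_inter, mem_neighborFinset]
  exact ⟨hT.left.isClique (by simp) (by simp [hw]) (ne_of_mem_of_not_mem hw hT.left_notMem).symm,
    hT.right.isClique (by simp) (by simp [hw]) (ne_of_mem_of_not_mem hw hT.right_notMem).symm⟩

theorem mem_colorsAt [DecidableEq κ] [Fintype (G.neighborSet v)] :
    α ∈ colorsAt G c v ↔ ∃ e ∈ G.edgeSet, v ∈ e ∧ c e = α := by
  simp [colorsAt, incidenceSet, and_assoc]

theorem card_colorsAt_le_degree [DecidableEq κ] [Fintype (G.neighborSet v)] :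
    (colorsAt G c v).card ≤ G.degree v :=
  Finset.card_image_le.trans_eq (G.card_incidenceFinset_eq_degree v)

-- The edges from `v` to `T` use `T.card` colors, none of which occurs inside `T`.
theorem IsRainbowClique.card_colorsWithin_inter_colorsAt_add_card_le [DecidableEq κ]
    [Fintype (G.neighborSet v)] (hT : IsRainbowClique G c (insert v T)) (hv : v ∉ T) :
    (colorsWithin c T ∩ colorsAt G c v).card + T.card ≤ G.degree v := by
  let star : Finset (Sym2 V) := T.image (s(v, ·))
  have v_mem_of_mem_star {e : Sym2 V} (he : e ∈ star) : v ∈ e := by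
    obtain ⟨w, -, rfl⟩ := Finset.mem_image.1 he
    exact Sym2.mem_mk_left v w
  have star_subset_edgesWithin : star ⊆ edgesWithin (insert v T) :=
    Finset.image_subset_iff.2 fun w hw => by simp [hw, (ne_of_mem_of_not_mem hw hv).symm]
  have star_subset_incidence : star ⊆ G.incidenceFinset v :=
    Finset.image_subset_iff.2 fun w hw => by
      simpa using hT.isClique (by simp) (by simp [hw]) (ne_of_mem_of_not_mem hw hv).symm
  have card_star_colors : (star.image c).card = T.card := by
    rw [Finset.card_image_of_injOn (hT.injOn.mono (mod_cast star_subset_edgesWithin)),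
      Finset.card_image_of_injective _ fun _ _ => Sym2.congr_right.1]
  have disjoint_colors : Disjoint (colorsWithin c T) (star.image c) := by
    simp only [colorsWithin, Finset.disjoint_left, Finset.mem_image, not_exists, not_and]
    rintro _ ⟨e, he, rfl⟩ e' he' hcolor
    have e'_eq : e' = e := hT.injOn (star_subset_edgesWithin he')
      (edgesWithin_mono (T.subset_insert v) he) hcolor
    exact hv ((mem_edgesWithin.1 he).1 v (e'_eq ▸ v_mem_of_mem_star he'))
  calc (colorsWithin c T ∩ colorsAt G c v).card + T.card
      = (colorsWithin c T ∩ colorsAt G c v ∪ star.image c).card := by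
        rw [Finset.card_union_of_disjoint (disjoint_colors.mono_left Finset.inter_subset_left),
          card_star_colors]
    _ ≤ (colorsAt G c v).card := Finset.card_le_card <| Finset.union_subset
        Finset.inter_subset_right (Finset.image_subset_image star_subset_incidence)
    _ ≤ G.degree v := card_colorsAt_le_degree

theorem IsRainbowLink.choose_two_add_two_mul_card_le [DecidableEq κ]
    [Fintype (G.neighborSet u)] [Fintype (G.neighborSet v)] (hT : IsRainbowLink G c u v T)
    (hcolors : colorsWithin c T ⊆ colorsAt G c u ∪ colorsAt G c v) :
    T.card.choose 2 + 2 * T.card ≤ G.degree u + G.degree v := by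
  have hu := hT.left.card_colorsWithin_inter_colorsAt_add_card_le hT.left_notMem
  have hv := hT.right.card_colorsWithin_inter_colorsAt_add_card_le hT.right_notMem
  have hchoose : T.card.choose 2 ≤
      (colorsWithin c T ∩ colorsAt G c u).card + (colorsWithin c T ∩ colorsAt G c v).card :=
    calc T.card.choose 2
        = (colorsWithin c T).card := ((hT.left.mono (T.subset_insert u)).card_colorsWithin).symm
      _ = (colorsWithin c T ∩ colorsAt G c u ∪ colorsWithin c T ∩ colorsAt G c v).card := by
          rw [← Finset.inter_union_distrib_left, Finset.inter_eq_left.2 hcolors]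
      _ ≤ _ := Finset.card_union_le _ _
  lia

end RainbowCliques

section Saturation

variable {V : Type} [DecidableEq V] {G : SimpleGraph V} {c : Sym2 V → ℕ} {u v : V} {r : ℕ}

theorem hasRainbowCopy_top_iff_exists_embedding {W : Type} [Fintype W] :
    HasRainbowCopy G (⊤ : SimpleGraph W) c ↔
      ∃ f : W ↪ V, IsRainbowClique G c (Finset.univ.map f) := by
  classical
  have injOn_iff (f : W ↪ V) : Set.InjOn c (edgesWithin (Finset.univ.map f)) ↔
      ∀ e₁ ∈ (⊤ : SimpleGraph W).edgeSet, ∀ e₂ ∈ (⊤ : SimpleGraph W).edgeSet,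
        e₁ ≠ e₂ → c (e₁.map f) ≠ c (e₂.map f) := by
    rw [edgesWithin_map, Finset.coe_map, coe_edgesWithin_univ,
      ← Set.InjOn.comp_iff f.sym2Map.injective.injOn, Set.injOn_iff_pairwise_ne]
    rfl
  constructor
  · rintro ⟨f, f_inj, f_adj, f_rainbow⟩
    refine ⟨⟨f, f_inj⟩, ?_, (injOn_iff _).2 f_rainbow⟩
    simpa [IsClique, Set.Pairwise, f_inj.eq_iff] using f_adj
  · rintro ⟨f, hf⟩
    refine ⟨f, f.injective, fun a b hab => hf.isClique ?_ ?_ (f.injective.ne hab),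
      (injOn_iff f).1 hf.injOn⟩ <;> simp

theorem hasRainbowCopy_top_fin_iff :
    HasRainbowCopy G (⊤ : SimpleGraph (Fin r)) c ↔
      ∃ S : Finset V, S.card = r ∧ IsRainbowClique G c S := by
  rw [hasRainbowCopy_top_iff_exists_embedding]
  constructor
  · rintro ⟨f, hf⟩
    exact ⟨_, by simp, hf⟩
  · rintro ⟨S, hS, hrainbow⟩
    let f : Fin r ↪ V := (S.equivFinOfCardEq hS).symm.toEmbedding.trans (.subtype (· ∈ S))
    have map_f : Finset.univ.map f = S := by
      rw [← Finset.map_map, Finset.map_univ_equiv]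
      exact S.attach_map_val
    exact ⟨f, map_f ▸ hrainbow⟩

variable [Fintype (G.neighborSet u)] [Fintype (G.neighborSet v)]

theorem IsProperEdgeColoring.update {α : ℕ}
    (hc : IsProperEdgeColoring G c) (hadj : ¬ G.Adj u v)
    (hu : α ∉ colorsAt G c u) (hv : α ∉ colorsAt G c v) :
    IsProperEdgeColoring (G ⊔ edge u v) (Function.update c s(u, v) α) := by
  have ne_new {e : Sym2 V} (he : e ∈ G.edgeSet) : e ≠ s(u, v) := by
    rintro rfl
    exact hadj he
  have color_ne {e : Sym2 V} (he : e ∈ G.edgeSet) {w : V} (hwe : w ∈ e) (hw : w ∈ s(u, v)) :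
      c e ≠ α := by
    rcases Sym2.mem_iff.1 hw with rfl | rfl
    exacts [fun h => hu (mem_colorsAt.2 ⟨e, he, hwe, h⟩),
      fun h => hv (mem_colorsAt.2 ⟨e, he, hwe, h⟩)]
  have mem_or_eq {e : Sym2 V} (he : e ∈ (G ⊔ edge u v).edgeSet) : e ∈ G.edgeSet ∨ e = s(u, v) := by
    rw [edgeSet_sup] at he
    exact he.imp_right fun h => (edgeSet_fromEdgeSet _ ▸ h).1
  rintro e₁ he₁ e₂ he₂ hne ⟨w, hw₁, hw₂⟩
  rcases mem_or_eq he₁ with he₁ | rfl <;> rcases mem_or_eq he₂ with he₂ | rfl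
  · simpa only [Function.update_of_ne (ne_new he₁), Function.update_of_ne (ne_new he₂)]
      using hc e₁ he₁ e₂ he₂ hne ⟨w, hw₁, hw₂⟩
  · simpa only [Function.update_of_ne (ne_new he₁), Function.update_self]
      using color_ne he₁ hw₁ hw₂
  · simpa only [Function.update_of_ne (ne_new he₂), Function.update_self]
      using (color_ne he₂ hw₂ hw₁).symm
  · exact absurd rfl hne

theorem IsRainbowSat.exists_isRainbowLink (hG : IsRainbowSat G (⊤ : SimpleGraph (Fin r)))
    (hc : IsProperEdgeColoring G c) (hfree : ¬ HasRainbowCopy G (⊤ : SimpleGraph (Fin r)) c)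
    (huv : u ≠ v) (hadj : ¬ G.Adj u v) {α : ℕ} (hu : α ∉ colorsAt G c u)
    (hv : α ∉ colorsAt G c v) :
    ∃ T, T.card = r - 2 ∧ IsRainbowLink G c u v T ∧ α ∉ colorsWithin c T := by
  obtain ⟨S, hS, hrainbow⟩ :=
    hasRainbowCopy_top_fin_iff.1 (hG.2 u v huv hadj _ (hc.update hadj hu hv))
  obtain ⟨huS, hvS⟩ : u ∈ S ∧ v ∈ S := by
    by_contra huvS
    exact hfree (hasRainbowCopy_top_fin_iff.2 ⟨S, hS, hrainbow.of_update huvS⟩)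
  refine ⟨(S.erase u).erase v, ?_, hrainbow.isRainbowLink_of_update huS hvS huv,
    hrainbow.notMem_colorsWithin_of_update huS hvS huv⟩
  rw [Finset.card_erase_of_mem (by simp [hvS, huv.symm]), Finset.card_erase_of_mem huS, hS]
  rfl

-- For a color `α` missing at `u` and `v`, the link avoiding `α` is the whole common neighborhood.
theorem IsRainbowSat.colorsWithin_commonNeighbors_subset
    (hG : IsRainbowSat G (⊤ : SimpleGraph (Fin r)))
    (hc : IsProperEdgeColoring G c) (hfree : ¬ HasRainbowCopy G (⊤ : SimpleGraph (Fin r)) c)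
    (huv : u ≠ v) (hadj : ¬ G.Adj u v)
    (hcommon : (G.neighborFinset u ∩ G.neighborFinset v).card ≤ r - 2) :
    colorsWithin c (G.neighborFinset u ∩ G.neighborFinset v) ⊆
      colorsAt G c u ∪ colorsAt G c v := by
  intro α hα
  by_contra hα_at
  simp only [Finset.mem_union, not_or] at hα_at
  obtain ⟨T, hT_card, hT, hαT⟩ := hG.exists_isRainbowLink hc hfree huv hadj hα_at.1 hα_at.2
  have hT_eq : T = G.neighborFinset u ∩ G.neighborFinset v :=
    Finset.eq_of_subset_of_card_le hT.subset_commonNeighbors (hcommon.trans_eq hT_card.symm)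
  exact hαT (hT_eq ▸ hα)

theorem IsRainbowSat.two_mul_le_card_commonNeighbors_add_max_degree (hr : 5 ≤ r)
    (hG : IsRainbowSat G (⊤ : SimpleGraph (Fin r))) (huv : u ≠ v) (hadj : ¬ G.Adj u v) :
    2 * (r - 1) ≤ (G.neighborFinset u ∩ G.neighborFinset v).card +
      max (G.degree u) (G.degree v) := by
  obtain ⟨c, hc, hfree⟩ := hG.1
  obtain ⟨α, hα⟩ := (colorsAt G c u ∪ colorsAt G c v).exists_notMem
  simp only [Finset.mem_union, not_or] at hα
  obtain ⟨T, hT_card, hT, -⟩ := hG.exists_isRainbowLink hc hfree huv hadj hα.1 hα.2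
  have hT_le := Finset.card_le_card hT.subset_commonNeighbors
  have common_le_degree : (G.neighborFinset u ∩ G.neighborFinset v).card ≤ G.degree u :=
    Finset.card_le_card Finset.inter_subset_left
  rcases le_or_gt (G.neighborFinset u ∩ G.neighborFinset v).card (r - 2) with hcommon | hcommon
  · have degree_sum := hT.choose_two_add_two_mul_card_le <|
      (colorsWithin_mono hT.subset_commonNeighbors).trans <|
        hG.colorsWithin_commonNeighbors_subset hc hfree huv hadj hcommon
    have three_le_choose : 3 ≤ T.card.choose 2 :=
      Nat.choose_le_choose (a := 3) 2 (by lia)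
    lia
  · lia

end Saturation

section Counting

variable {V : Type*} [Fintype V] [DecidableEq V] (G : SimpleGraph V) [DecidableRel G.Adj]

theorem sum_card_neighborFinset_inter_le_sum_degree (S T : Finset V) :
    ∑ u ∈ S, (G.neighborFinset u ∩ T).card ≤ ∑ w ∈ T, G.degree w := by
  calc ∑ u ∈ S, (G.neighborFinset u ∩ T).card
      = ∑ u ∈ S, (T.bipartiteAbove G.Adj u).card := by
        simp only [Finset.bipartiteAbove, Finset.inter_comm _ T, ← Finset.filter_mem_eq_inter,
          mem_neighborFinset]
    _ = ∑ w ∈ T, (S.bipartiteBelow G.Adj w).card :=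
        Finset.sum_card_bipartiteAbove_eq_sum_card_bipartiteBelow _
    _ ≤ ∑ w ∈ T, G.degree w := Finset.sum_le_sum fun w _ => Finset.card_le_card fun u hu => by
        simpa using ((Finset.mem_bipartiteBelow G.Adj).1 hu).2.symm

theorem mul_card_le_two_mul_card_edgeFinset_add_of_nonadj {k : ℕ} (v : V)
    (h : ∀ u, u ≠ v → ¬ G.Adj u v →
      k ≤ (G.neighborFinset u ∩ G.neighborFinset v).card + G.degree u) :
    k * Fintype.card V ≤ 2 * G.edgeFinset.card + k * (G.degree v + 1) := by
  let N := G.neighborFinset v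
  let R := (insert v N)ᶜ
  have card_R : R.card + (G.degree v + 1) = Fintype.card V := by
    rw [← card_neighborFinset_eq_degree, ← Finset.card_insert_of_notMem (a := v) (by simp),
      Finset.card_compl_add_card]
  have disjoint_R_N : Disjoint R N :=
    disjoint_compl_left.mono_right (Finset.subset_insert v N)
  have mul_card_R : R.card * k ≤ 2 * G.edgeFinset.card :=
    calc R.card * k
        ≤ ∑ u ∈ R, ((G.neighborFinset u ∩ N).card + G.degree u) := by
          refine Finset.card_nsmul_le_sum _ _ _ fun u hu => ?_
          obtain ⟨hne, hadj⟩ : u ≠ v ∧ ¬ G.Adj v u := by simpa [R, N] using hu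
          exact h u hne fun huv => hadj huv.symm
      _ = ∑ u ∈ R, (G.neighborFinset u ∩ N).card + ∑ u ∈ R, G.degree u :=
          Finset.sum_add_distrib
      _ ≤ ∑ w ∈ N, G.degree w + ∑ u ∈ R, G.degree u := by
          gcongr
          exact sum_card_neighborFinset_inter_le_sum_degree G R N
      _ = ∑ w ∈ R ∪ N, G.degree w := by
          rw [Finset.sum_union disjoint_R_N, add_comm]
      _ ≤ ∑ w, G.degree w := Finset.sum_le_sum_of_subset (Finset.subset_univ _)
      _ = 2 * G.edgeFinset.card := G.sum_degrees_eq_twice_card_edges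
  rw [← card_R]
  linarith

theorem mul_card_le_two_mul_card_edgeFinset_add_sq {k : ℕ}
    (h : ∀ u v, u ≠ v → ¬ G.Adj u v →
      k ≤ (G.neighborFinset u ∩ G.neighborFinset v).card + max (G.degree u) (G.degree v)) :
    k * Fintype.card V ≤ 2 * G.edgeFinset.card + k ^ 2 := by
  cases isEmpty_or_nonempty V
  · simp
  obtain ⟨v, hv⟩ := G.exists_minimal_degree_vertex
  have degree_v_le (u : V) : G.degree v ≤ G.degree u := hv ▸ G.minDegree_le_degree u
  rcases le_or_gt k (G.degree v) with hk | hk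
  · calc k * Fintype.card V = ∑ _ : V, k := by simp [mul_comm]
      _ ≤ ∑ u, G.degree u := Finset.sum_le_sum fun u _ => hk.trans (degree_v_le u)
      _ = 2 * G.edgeFinset.card := G.sum_degrees_eq_twice_card_edges
      _ ≤ _ := Nat.le_add_right _ _
  · calc k * Fintype.card V
        ≤ 2 * G.edgeFinset.card + k * (G.degree v + 1) :=
          mul_card_le_two_mul_card_edgeFinset_add_of_nonadj G v fun u hne hadj => by
            simpa only [max_eq_left (degree_v_le u)] using h u v hne hadj
      _ ≤ 2 * G.edgeFinset.card + k ^ 2 := by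
          rw [sq]
          gcongr
          exact hk

end Counting

theorem stmt_3_general {V : Type} [Fintype V] {G : SimpleGraph V} {r : ℕ} (hr : 5 ≤ r)
    (hG : IsRainbowSat G (⊤ : SimpleGraph (Fin r))) :
    ((r : ℝ) - 1) * Fintype.card V - 2 * ((r : ℝ) - 1) ^ 2 ≤ G.edgeSet.ncard := by
  classical
  have hcount := mul_card_le_two_mul_card_edgeFinset_add_sq G fun _ _ huv hadj =>
    hG.two_mul_le_card_commonNeighbors_add_max_degree hr huv hadj
  rw [← coe_edgeFinset, Set.ncard_coe_finset]
  have hcount_real :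
      2 * ((r : ℝ) - 1) * Fintype.card V ≤ 2 * G.edgeFinset.card + (2 * ((r : ℝ) - 1)) ^ 2 := by
    have one_le_r : 1 ≤ r := by lia
    exact_mod_cast hcount
  linarith

/-- For every `r ≥ 5` there is a constant `C` such that every
`n`-vertex rainbow `K_r`-saturated graph has at least `(r-1)n - C` edges. -/
theorem stmt_3 (r : ℕ) (hr : 5 ≤ r) :
    ∃ C : ℝ, ∀ n : ℕ, ∀ G : SimpleGraph (Fin n),
      IsRainbowSat G (⊤ : SimpleGraph (Fin r)) →
      ((r : ℝ) - 1) * (n : ℝ) - C ≤ (G.edgeSet.ncard : ℝ) :=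
  ⟨2 * ((r : ℝ) - 1) ^ 2, fun n G hG => by simpa using stmt_3_general hr hG⟩
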